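/- Let Y be a finite-dimensional real vector space and g an asymmetric norm on Y, with Y carrying the real normed space structure of the associated norm ‖y‖ = max (g y) (g (-y)). Then c(Y) = 0 (i.e., for every ε > 0 there exists y with g y = 1 and g (-y) < ε) if and only if there exists e ∈ Y with g e = 1 and g (-e) = 0 (i.e., Y is not a T1 space). -/

import Mathlib

/-!
In finite dimension the set `{y | g y = 1} ∩ closedBall 0 1` is compact, because `g` is
1-Lipschitz for the associated norm: `g x - g y ≤ g (x - y) ≤ ‖x - y‖`. Hence `y ↦ g (-y)` attains
its minimum there, at `e` say. Points with `g y = 1` and `g (-y) < ε ≤ 1` lie in this set, so if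
the index is zero, then the minimum `g (-e)` is zero.
-/

/-- `g` is an asymmetric norm on the real vector space `Y`. -/
def IsAsymmNorm {Y : Type*} [AddCommGroup Y] [Module ℝ Y] (g : Y → ℝ) : Prop :=
  (∀ y, 0 ≤ g y) ∧ (∀ (c : ℝ), 0 ≤ c → ∀ y, g (c • y) = c * g y) ∧
  (∀ y z, g (y + z) ≤ g y + g z) ∧ (∀ y, g y = 0 → g (-y) = 0 → y = 0)

theorem IsAsymmNorm.continuous {Y : Type*} [NormedAddCommGroup Y] [NormedSpace ℝ Y]
    {g : Y → ℝ} (hg : IsAsymmNorm g) (hYnorm : ∀ y : Y, ‖y‖ = max (g y) (g (-y))) :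
    Continuous g := by
  have hlip : LipschitzWith 1 g := LipschitzWith.of_le_add fun x y => by
    have h := hg.2.2.1 y (x - y)
    rw [add_sub_cancel] at h
    have h' : g (x - y) ≤ ‖x - y‖ := (hYnorm (x - y)).symm ▸ le_max_left _ _
    rw [dist_eq_norm]
    linarith
  exact hlip.continuous

/-- In a finite-dimensional asymmetric normed space, `c(Y) = 0` iff `Y` is not T1,
i.e. iff there exists `e` with `g e = 1` and `g (-e) = 0`. -/
theorem index_zero_iff_not_T1_of_finiteDimensional
    {Y : Type*} [NormedAddCommGroup Y] [NormedSpace ℝ Y] [FiniteDimensional ℝ Y]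
    (g : Y → ℝ) (hg : IsAsymmNorm g)
    (hYnorm : ∀ y : Y, ‖y‖ = max (g y) (g (-y))) :
    (∀ ε > (0 : ℝ), ∃ y : Y, g y = 1 ∧ g (-y) < ε) ↔
    (∃ e : Y, g e = 1 ∧ g (-e) = 0) := by
  constructor
  · intro h
    have hcont := hg.continuous hYnorm
    have hK : IsCompact ({y : Y | g y = 1} ∩ Metric.closedBall 0 1) :=
      (isCompact_closedBall (0 : Y) 1).inter_left (isClosed_eq hcont continuous_const)
    have hmem : ∀ y : Y, g y = 1 → g (-y) ≤ 1 →
        y ∈ {y : Y | g y = 1} ∩ Metric.closedBall 0 1 := by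
      intro y h1 h2
      refine ⟨h1, ?_⟩
      rw [mem_closedBall_zero_iff, hYnorm]
      exact max_le h1.le h2
    obtain ⟨y₀, h1, h2⟩ := h 1 one_pos
    obtain ⟨e, he, hmin⟩ := hK.exists_isMinOn ⟨y₀, hmem y₀ h1 h2.le⟩
      (hcont.comp continuous_neg).continuousOn
    refine ⟨e, he.1, le_antisymm (not_lt.1 fun hpos => ?_) (hg.1 _)⟩
    -- The cap at `1` keeps the point obtained inside the unit ball.
    obtain ⟨y, hy1, hy2⟩ := h (min 1 (g (-e))) (lt_min one_pos hpos)
    have hle : g (-e) ≤ g (-y) := hmin (hmem y hy1 (hy2.le.trans (min_le_left _ _)))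
    exact absurd (hy2.trans_le (min_le_right _ _)) hle.not_gt
  · rintro ⟨e, h1, h2⟩ ε hε
    exact ⟨e, h1, h2.trans_lt hε⟩
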